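/- arXiv:2009.09885 — 6 statements merged into one kernel-verified Lean document; each statement's English description precedes it below -/
import Mathlib

section
/- Let f : B₃ → SL₂(ℤ) be any group homomorphism satisfying f(ā) = T and f(b̄) = (T·S·T)⁻¹. Then the kernel of f equals the subgroup of all integer powers of the element (ā·b̄·ā)⁻⁴ (i.e., ker f = zpowers((ā·b̄·ā)⁻⁴)), and the element (ā·b̄·ā)⁴ has infinite order in B₃; in particular, the kernel of f is an infinite cyclic group generated by (ā·b̄·ā)⁻⁴. -/
/-- The braid relator set: `a·b·a·(b·a·b)⁻¹` in the free group on two generators. -/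
def braidRel : Set (FreeGroup (Fin 2)) :=
  {FreeGroup.of 0 * FreeGroup.of 1 * FreeGroup.of 0 *
    (FreeGroup.of 1 * FreeGroup.of 0 * FreeGroup.of 1)⁻¹}

/-- The braid group on three strands, `B₃ = ⟨a, b ∣ a·b·a = b·a·b⟩`. -/
abbrev B3 : Type := PresentedGroup braidRel

/-- The image `ā` of the generator `a` in `B₃`. -/
def ba : B3 := PresentedGroup.of 0

/-- The image `b̄` of the generator `b` in `B₃`. -/
def bb : B3 := PresentedGroup.of 1

/-!
Write `Δ = aba`. Conjugation by `Δ` exchanges `a` and `b`, and together with `a * b = Δ * a⁻¹` and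
`b⁻¹ * a⁻¹ = Δ⁻¹ * b` this lets one push all positive powers of `a` and negative powers of `b` into
powers of `Δ`: every braid has the form `Δ ^ m * w * Δ ^ n` with `w` a product of letters `a⁻¹`
and `b`. Under `f`, such a `w` becomes a matrix whose diagonal is positive and whose off-diagonal
entries are nonpositive, not both zero unless `w = 1`, whereas `Δ` becomes the rotation `S⁻¹`.
If `f` kills `Δ ^ m * w * Δ ^ n`, then the matrix of `w` is a power of `S`, so it commutes with `S`;
its off-diagonal entries then sum to zero, which forces `w = 1` and then
`4 ∣ m + n`. The exponent sum of `Δ` is `3`, so `Δ` has infinite order.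
-/

section HalfTwist

variable {G : Type*} [Group G]

/-- The half twist `Δ = aba` (Garside element) attached to a pair of elements `a`, `b`, meant for
pairs satisfying the braid relation. -/
def halfTwist (a b : G) : G := a * b * a

/-- The monoid of products of letters `a⁻¹` and `b`. When `a` and `b` are the standard generators
of `B₃`, its elements are the alternating braids. -/
def alternatingMonoid (a b : G) : Submonoid G := Submonoid.closure {a⁻¹, b}

/-- `g` lies in a double coset `⟨Δ⟩ w ⟨Δ⟩`, where `Δ` is the half twist and `w` is a product of
letters `a⁻¹` and `b`. -/
def HasAlternatingForm (a b g : G) : Prop :=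
  ∃ w ∈ alternatingMonoid a b, ∃ m n : ℤ, g = halfTwist a b ^ m * w * halfTwist a b ^ n

variable {a b : G}

theorem inv_mem_alternatingMonoid : a⁻¹ ∈ alternatingMonoid a b :=
  Submonoid.subset_closure (Set.mem_insert _ _)

theorem mem_alternatingMonoid : b ∈ alternatingMonoid a b :=
  Submonoid.subset_closure (Set.mem_insert_of_mem _ rfl)

theorem semiconjBy_halfTwist_left (hab : a * b * a = b * a * b) :
    SemiconjBy (halfTwist a b) a b := by
  rw [SemiconjBy, halfTwist, hab]
  simp only [mul_assoc] at hab ⊢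
  rw [hab]

theorem semiconjBy_halfTwist_right (hab : a * b * a = b * a * b) :
    SemiconjBy (halfTwist a b) b a := by
  rw [SemiconjBy, halfTwist, mul_assoc a b a, mul_assoc a (b * a) b, ← hab, mul_assoc a b a]

theorem halfTwist_mem_normalizer (hab : a * b * a = b * a * b) :
    halfTwist a b ∈ Subgroup.normalizer ({a, b} : Set G) := by
  rw [Subgroup.mem_normalizer_iff_conj_image_eq, Set.image_pair, MulAut.conj_apply,
    MulAut.conj_apply, (semiconjBy_halfTwist_left hab).eq, (semiconjBy_halfTwist_right hab).eq,
    mul_inv_cancel_right, mul_inv_cancel_right, Set.pair_comm]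

theorem exists_semiconjBy_halfTwist_zpow (hab : a * b * a = b * a * b) (m : ℤ) {x : G}
    (hx : x ∈ ({a, b} : Set G)) :
    ∃ y ∈ ({a, b} : Set G), SemiconjBy (halfTwist a b ^ m) y x :=
  ⟨_, (Subgroup.mem_set_normalizer_iff''.1 (zpow_mem (halfTwist_mem_normalizer hab) m) x).1 hx,
    by rw [SemiconjBy]; group⟩

theorem HasAlternatingForm.of_mem {w : G} (hw : w ∈ alternatingMonoid a b) :
    HasAlternatingForm a b w :=
  ⟨w, hw, 0, 0, by simp⟩

theorem HasAlternatingForm.zpow_mul_mul_zpow {g : G} (hg : HasAlternatingForm a b g) (i j : ℤ) :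
    HasAlternatingForm a b (halfTwist a b ^ i * g * halfTwist a b ^ j) := by
  obtain ⟨w, hw, m, n, rfl⟩ := hg
  exact ⟨w, hw, i + m, n + j, by simp only [zpow_add, mul_assoc]⟩

theorem HasAlternatingForm.left_mul (hab : a * b * a = b * a * b) {w : G}
    (hw : w ∈ alternatingMonoid a b) : HasAlternatingForm a b (a * w) := by
  induction hw using Submonoid.closure_induction_left with
  | one =>
    have ha : a * 1 = halfTwist a b ^ (1 : ℤ) * b * halfTwist a b ^ (-1 : ℤ) := by
      rw [mul_one, zpow_one, zpow_neg_one, eq_mul_inv_iff_mul_eq,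
        (semiconjBy_halfTwist_right hab).eq]
    exact ha ▸ (HasAlternatingForm.of_mem mem_alternatingMonoid).zpow_mul_mul_zpow 1 (-1)
  | mul_left x hx v hv _ =>
    rcases hx with rfl | rfl
    · rw [mul_inv_cancel_left]
      exact .of_mem hv
    · exact ⟨a⁻¹ * v, mul_mem inv_mem_alternatingMonoid hv, 1, 0, by rw [halfTwist]; group⟩

theorem HasAlternatingForm.inv_right_mul (hab : a * b * a = b * a * b) {w : G}
    (hw : w ∈ alternatingMonoid a b) : HasAlternatingForm a b (b⁻¹ * w) := by
  induction hw using Submonoid.closure_induction_left with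
  | one =>
    have hb : b⁻¹ * 1 = halfTwist a b ^ (1 : ℤ) * a⁻¹ * halfTwist a b ^ (-1 : ℤ) := by
      rw [mul_one, zpow_one, zpow_neg_one, eq_mul_inv_iff_mul_eq,
        (semiconjBy_halfTwist_left hab).inv_right.eq]
    exact hb ▸ (HasAlternatingForm.of_mem inv_mem_alternatingMonoid).zpow_mul_mul_zpow 1 (-1)
  | mul_left x hx v hv _ =>
    rcases hx with rfl | rfl
    · refine ⟨b * v, mul_mem mem_alternatingMonoid hv, -1, 0, ?_⟩
      rw [halfTwist, hab]
      group
    · rw [inv_mul_cancel_left]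
      exact .of_mem hv

theorem HasAlternatingForm.generator_mul (hab : a * b * a = b * a * b) {x w : G}
    (hx : x ∈ ({a, b} : Set G)) (hw : w ∈ alternatingMonoid a b) :
    HasAlternatingForm a b (x * w) ∧ HasAlternatingForm a b (x⁻¹ * w) := by
  rcases hx with rfl | rfl
  · exact ⟨left_mul hab hw, of_mem (mul_mem inv_mem_alternatingMonoid hw)⟩
  · exact ⟨of_mem (mul_mem mem_alternatingMonoid hw), inv_right_mul hab hw⟩

theorem HasAlternatingForm.of_mem_closure (hab : a * b * a = b * a * b) {g : G}
    (hg : g ∈ Subgroup.closure {a, b}) : HasAlternatingForm a b g := by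
  induction hg using Subgroup.closure_induction_left with
  | one => exact of_mem (one_mem _)
  | mul_left x hx g _ ih =>
    obtain ⟨w, hw, m, n, rfl⟩ := ih
    obtain ⟨y, hy, hyx⟩ := exists_semiconjBy_halfTwist_zpow hab m hx
    simpa only [← mul_assoc, hyx.eq] using
      (generator_mul hab hy hw).1.zpow_mul_mul_zpow m n
  | inv_mul_cancel x hx g _ ih =>
    obtain ⟨w, hw, m, n, rfl⟩ := ih
    obtain ⟨y, hy, hyx⟩ := exists_semiconjBy_halfTwist_zpow hab m hx
    simpa only [← mul_assoc, hyx.inv_right.eq] using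
      (generator_mul hab hy hw).2.zpow_mul_mul_zpow m n

end HalfTwist

section AlternatingMatrix

/-- The monoid of `2 × 2` matrices with positive diagonal and nonpositive off-diagonal entries. -/
def alternatingMatrices (R : Type*) [Ring R] [PartialOrder R] [IsStrictOrderedRing R] :
    Submonoid (Matrix (Fin 2) (Fin 2) R) where
  carrier := {A | 0 < A 0 0 ∧ A 0 1 ≤ 0 ∧ A 1 0 ≤ 0 ∧ 0 < A 1 1}
  one_mem' := by simp
  mul_mem' := by
    rintro A B ⟨hA₀₀, hA₀₁, hA₁₀, hA₁₁⟩ ⟨hB₀₀, hB₀₁, hB₁₀, hB₁₁⟩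
    simp only [Set.mem_ofPred_eq, Matrix.mul_apply, Fin.sum_univ_two]
    exact ⟨add_pos_of_pos_of_nonneg (mul_pos hA₀₀ hB₀₀) (mul_nonneg_of_nonpos_of_nonpos hA₀₁ hB₁₀),
      add_nonpos (mul_nonpos_of_nonneg_of_nonpos hA₀₀.le hB₀₁)
        (mul_nonpos_of_nonpos_of_nonneg hA₀₁ hB₁₁.le),
      add_nonpos (mul_nonpos_of_nonpos_of_nonneg hA₁₀ hB₀₀.le)
        (mul_nonpos_of_nonneg_of_nonpos hA₁₁.le hB₁₀),
      add_pos_of_nonneg_of_pos (mul_nonneg_of_nonpos_of_nonpos hA₁₀ hB₀₁) (mul_pos hA₁₁ hB₁₁)⟩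

theorem add_eq_zero_of_commute_rotation {R : Type*} [Ring R] {A : Matrix (Fin 2) (Fin 2) R}
    (hA : Commute A !![0, -1; 1, 0]) : A 0 1 + A 1 0 = 0 := by
  have h : A 0 1 = -A 1 0 := by simpa [Matrix.mul_apply] using congrFun₂ hA.eq 0 0
  exact eq_neg_iff_add_eq_zero.1 h

open ModularGroup

theorem coe_T_mul_S_mul_T_inv :
    (((T * S * T)⁻¹ : Matrix.SpecialLinearGroup (Fin 2) ℤ) : Matrix (Fin 2) (Fin 2) ℤ) =
      !![1, 0; -1, 1] := by
  decide

theorem orderOf_S : orderOf S = 4 :=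
  orderOf_eq_prime_pow (p := 2) (n := 1) (by decide) (by decide)

end AlternatingMatrix

section Representation

open ModularGroup

variable {G : Type*} [Group G] {a b : G} {f : G →* Matrix.SpecialLinearGroup (Fin 2) ℤ}

theorem map_halfTwist (hfa : f a = T) (hfb : f b = (T * S * T)⁻¹) :
    f (halfTwist a b) = S⁻¹ := by
  rw [halfTwist, map_mul, map_mul, hfa, hfb]
  decide

theorem map_mem_alternatingMatrices (hfa : f a = T) (hfb : f b = (T * S * T)⁻¹) {w : G}
    (hw : w ∈ alternatingMonoid a b) :
    (f w : Matrix (Fin 2) (Fin 2) ℤ) ∈ alternatingMatrices ℤ := by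
  suffices h : alternatingMonoid a b ≤
      (alternatingMatrices ℤ).comap (Matrix.SpecialLinearGroup.coeMonoidHom.comp f) from h hw
  rw [alternatingMonoid, Submonoid.closure_le]
  rintro x (rfl | rfl)
  · change (f a⁻¹ : Matrix (Fin 2) (Fin 2) ℤ) ∈ alternatingMatrices ℤ
    rw [map_inv, hfa, coe_T_inv]
    simp [alternatingMatrices]
  · change (f x : Matrix (Fin 2) (Fin 2) ℤ) ∈ alternatingMatrices ℤ
    rw [hfb, coe_T_mul_S_mul_T_inv]
    simp [alternatingMatrices]

theorem eq_one_of_commute_map_S (hfa : f a = T) (hfb : f b = (T * S * T)⁻¹) {w : G}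
    (hw : w ∈ alternatingMonoid a b) (hcomm : Commute (f w) S) : w = 1 := by
  have hsum : f w 0 1 + f w 1 0 = 0 :=
    add_eq_zero_of_commute_rotation (hcomm.map Matrix.SpecialLinearGroup.coeMonoidHom)
  induction hw using Submonoid.closure_induction_left with
  | one => rfl
  | mul_left x hx v hv _ =>
    exfalso
    obtain ⟨h₀₀, h₀₁, h₁₀, h₁₁⟩ := map_mem_alternatingMatrices hfa hfb hv
    rw [map_mul, Matrix.SpecialLinearGroup.coe_mul] at hsum
    rcases hx with rfl | rfl
    · have hsum' : -f v 1 1 + f v 0 1 + f v 1 0 = 0 := by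
        rw [map_inv, hfa, coe_T_inv] at hsum
        simpa [Matrix.mul_apply, add_comm] using hsum
      omega
    · have hsum' : f v 0 1 + (-f v 0 0 + f v 1 0) = 0 := by
        rw [hfb, coe_T_mul_S_mul_T_inv] at hsum
        simpa [Matrix.mul_apply] using hsum
      omega

theorem map_halfTwist_zpow_eq_one_iff (hfa : f a = T) (hfb : f b = (T * S * T)⁻¹) (k : ℤ) :
    f (halfTwist a b ^ k) = 1 ↔ 4 ∣ k := by
  rw [map_zpow, map_halfTwist hfa hfb, ← orderOf_dvd_iff_zpow_eq_one, orderOf_inv, orderOf_S,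
    Nat.cast_ofNat]

theorem ker_eq_zpowers_halfTwist_pow (hab : a * b * a = b * a * b)
    (hgen : Subgroup.closure {a, b} = ⊤) (hfa : f a = T) (hfb : f b = (T * S * T)⁻¹) :
    f.ker = Subgroup.zpowers (halfTwist a b ^ 4) := by
  apply le_antisymm
  · intro g hg
    obtain ⟨w, hw, m, n, rfl⟩ := HasAlternatingForm.of_mem_closure hab (hgen ▸ Subgroup.mem_top g)
    have hfw : f w = S ^ (n + m) := by
      rw [MonoidHom.mem_ker, map_mul, map_mul, map_zpow, map_zpow, map_halfTwist hfa hfb,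
        inv_zpow, inv_zpow, mul_inv_eq_one, inv_mul_eq_iff_eq_mul] at hg
      rw [hg, ← zpow_add, add_comm]
    have hcomm : Commute (f w) S := hfw ▸ Commute.zpow_self S (n + m)
    obtain rfl := eq_one_of_commute_map_S hfa hfb hw hcomm
    rw [mul_one, ← zpow_add] at hg ⊢
    obtain ⟨k, hk⟩ := (map_halfTwist_zpow_eq_one_iff hfa hfb (m + n)).1 hg
    exact ⟨k, by simp only [hk, zpow_mul, zpow_ofNat]⟩
  · rw [Subgroup.zpowers_le, MonoidHom.mem_ker, ← zpow_natCast,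
      map_halfTwist_zpow_eq_one_iff hfa hfb]
    exact dvd_rfl

end Representation

section BraidGroup

theorem ba_mul_bb_mul_ba : ba * bb * ba = bb * ba * bb :=
  mul_inv_eq_one.1 (PresentedGroup.one_of_mem (rels := braidRel) rfl)

theorem closure_ba_bb : Subgroup.closure {ba, bb} = ⊤ := by
  rw [← PresentedGroup.closure_range_of braidRel]
  congr 1
  ext x
  simp [Fin.exists_fin_two, ba, bb, eq_comm]

/-- The exponent sum of a braid word, i.e. the abelianization of `B₃`, written multiplicatively. -/
def exponentSum : B3 →* Multiplicative ℤ :=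
  PresentedGroup.toGroup (f := fun _ ↦ Multiplicative.ofAdd 1) (by
    rintro _ rfl
    simp)

theorem exponentSum_halfTwist : exponentSum (halfTwist ba bb) = Multiplicative.ofAdd 3 := by
  simp only [halfTwist, ba, bb, exponentSum, map_mul, PresentedGroup.toGroup.of]
  rfl

theorem not_isOfFinOrder_halfTwist : ¬ IsOfFinOrder (halfTwist ba bb) := fun h ↦ by
  have h₃ : IsOfFinOrder (Multiplicative.ofAdd (3 : ℤ)) :=
    exponentSum_halfTwist ▸ exponentSum.isOfFinOrder h
  exact not_isOfFinOrder_of_isMulTorsionFree (by decide) h₃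

end BraidGroup

theorem kernel_of_braid_to_SL2Z
    (f : B3 →* Matrix.SpecialLinearGroup (Fin 2) ℤ)
    (hfa : f ba = ModularGroup.T)
    (hfb : f bb = (ModularGroup.T * ModularGroup.S * ModularGroup.T)⁻¹) :
    f.ker = Subgroup.zpowers ((ba * bb * ba) ^ (-4 : ℤ)) ∧
      ¬ IsOfFinOrder ((ba * bb * ba) ^ (4 : ℕ)) := by
  constructor
  · rw [zpow_neg, Subgroup.zpowers_inv, zpow_ofNat]
    exact ker_eq_zpowers_halfTwist_pow ba_mul_bb_mul_ba closure_ba_bb hfa hfb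
  · exact fun h ↦ not_isOfFinOrder_halfTwist (h.of_pow four_ne_zero)
end

section
/- There exists a surjective group homomorphism f : B₃ → SL₂(ℤ) such that f(ā) = T and f(b̄) = (T·S·T)⁻¹; moreover, this homomorphism satisfies f((ā·b̄·ā)⁻¹) = S. -/
namespace B3

theorem closure_ba_bb : Subgroup.closure {ba, bb} = ⊤ := by
  have range_of : Set.range (PresentedGroup.of : Fin 2 → B3) = {ba, bb} := by
    ext g
    simp [Fin.exists_fin_two, ba, bb, eq_comm]
  rw [← range_of, PresentedGroup.closure_range_of]

variable {G : Type*} [Group G] {x y : G}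

/-- The universal property of `B3`: the homomorphism to `G` sending the generators `ba` and `bb`
to a given pair `x`, `y` that satisfies the braid relation. -/
def lift (h : x * y * x = y * x * y) : B3 →* G :=
  PresentedGroup.toGroup (f := ![x, y]) (by simp [braidRel, h])

@[simp]
theorem lift_ba (h : x * y * x = y * x * y) : lift h ba = x :=
  PresentedGroup.toGroup.of _

@[simp]
theorem lift_bb (h : x * y * x = y * x * y) : lift h bb = y :=
  PresentedGroup.toGroup.of _

theorem range_lift (h : x * y * x = y * x * y) : (lift h).range = Subgroup.closure {x, y} := by
  rw [MonoidHom.range_eq_map, ← closure_ba_bb, MonoidHom.map_closure, Set.image_pair,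
    lift_ba, lift_bb]

theorem lift_surjective_iff (h : x * y * x = y * x * y) :
    Function.Surjective (lift h) ↔ Subgroup.closure {x, y} = ⊤ := by
  rw [← MonoidHom.range_eq_top, range_lift]

end B3

section

variable {G : Type*} [Group G] (s t : G)

theorem mul_inv_mul_mul_mul_eq_inv : t * (t * s * t)⁻¹ * t = s⁻¹ := by
  group

theorem braid_relation_iff_mul_pow_three_eq_sq :
    t * (t * s * t)⁻¹ * t = (t * s * t)⁻¹ * t * (t * s * t)⁻¹ ↔ (s * t) ^ 3 = s ^ 2 := by
  have rhs_eq : (t * s * t)⁻¹ * t * (t * s * t)⁻¹ = (t * s * t * s * t)⁻¹ := by group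
  have pow_three : (s * t) ^ 3 = s * (t * s * t * s * t) := by
    simp only [pow_succ, pow_zero, one_mul, mul_assoc]
  rw [mul_inv_mul_mul_mul_eq_inv, rhs_eq, inv_inj, pow_three, sq, mul_right_inj, eq_comm]

theorem closure_pair_mul_mul_inv :
    Subgroup.closure {t, (t * s * t)⁻¹} = Subgroup.closure {s, t} := by
  apply le_antisymm <;> rw [Subgroup.closure_le, Set.pair_subset_iff]
  · have hs : s ∈ Subgroup.closure {s, t} := Subgroup.mem_closure_of_mem (by simp)
    have ht : t ∈ Subgroup.closure {s, t} := Subgroup.mem_closure_of_mem (by simp)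
    exact ⟨ht, inv_mem (mul_mem (mul_mem ht hs) ht)⟩
  · have ht : t ∈ Subgroup.closure {t, (t * s * t)⁻¹} := Subgroup.mem_closure_of_mem (by simp)
    have hu : (t * s * t)⁻¹ ∈ Subgroup.closure {t, (t * s * t)⁻¹} :=
      Subgroup.mem_closure_of_mem (by simp)
    have hs : s⁻¹ ∈ Subgroup.closure {t, (t * s * t)⁻¹} := by
      rw [← mul_inv_mul_mul_mul_eq_inv s t]
      exact mul_mem (mul_mem ht hu) ht
    exact ⟨inv_mem_iff.mp hs, ht⟩

end

theorem S_mul_T_pow_three_eq_S_sq :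
    (ModularGroup.S * ModularGroup.T) ^ 3 = ModularGroup.S ^ 2 := by
  decide

theorem exists_surjective_braid_to_SL2Z :
    ∃ f : B3 →* Matrix.SpecialLinearGroup (Fin 2) ℤ,
      Function.Surjective f ∧
      f ba = ModularGroup.T ∧
      f bb = (ModularGroup.T * ModularGroup.S * ModularGroup.T)⁻¹ ∧
      f ((ba * bb * ba)⁻¹) = ModularGroup.S := by
  have braid_relation :=
    (braid_relation_iff_mul_pow_three_eq_sq _ _).mpr S_mul_T_pow_three_eq_S_sq
  refine ⟨B3.lift braid_relation, ?_, B3.lift_ba _, B3.lift_bb _, ?_⟩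
  · rw [B3.lift_surjective_iff, closure_pair_mul_mul_inv, SpecialLinearGroup.SL2Z_generators]
  · rw [map_inv, map_mul, map_mul, B3.lift_ba, B3.lift_bb, mul_inv_mul_mul_mul_eq_inv, inv_inv]
end

section
/- Let σ : F₂ → F₂ be the unique group endomorphism with σ(α) = α·β·α⁻¹ and σ(β) = α⁻¹, and let Θ = α·β·α⁻¹·β⁻¹ ∈ F₂. Then σ(Θ) = Θ, and the fourth iterate of σ is conjugation by Θ: for every x ∈ F₂, σ(σ(σ(σ(x)))) = Θ·x·Θ⁻¹. -/
/-- The free group on two generators. -/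
abbrev F2 : Type := FreeGroup (Fin 2)

/-- The first generator of the free group F2. -/
def fα : F2 := FreeGroup.of 0

/-- The second generator of the free group F2. -/
def fβ : F2 := FreeGroup.of 1

/-!
Writing `Θ = ⁅a, b⁆`, the endomorphism `σ` fixes `Θ`, while `σ²` sends `a` to `Θ * a⁻¹` and `b` to
`b⁻¹ * Θ⁻¹`. Thus `σ²` inverts both generators up to a factor fixed by `σ`, and applying it twice
gives `Θ * a * Θ⁻¹` and `Θ * b * Θ⁻¹`.
-/

section

open scoped commutatorElement

variable {G : Type*} [Group G] {σ : G →* G} {a b : G}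

theorem map_commutatorElement_eq_self (hσa : σ a = a * b * a⁻¹) (hσb : σ b = a⁻¹) :
    σ ⁅a, b⁆ = ⁅a, b⁆ := by
  rw [map_commutatorElement, hσa, hσb]
  group

theorem map_map_left_eq_commutatorElement_mul_inv
    (hσa : σ a = a * b * a⁻¹) (hσb : σ b = a⁻¹) :
    σ (σ a) = ⁅a, b⁆ * a⁻¹ := by
  simp only [hσa, hσb, map_mul, map_inv]
  group

theorem map_map_right_eq_inv_mul_commutatorElement_inv
    (hσa : σ a = a * b * a⁻¹) (hσb : σ b = a⁻¹) :
    σ (σ b) = b⁻¹ * ⁅a, b⁆⁻¹ := by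
  rw [hσb, map_inv, hσa]
  group

theorem map_four_left_eq_conj (hσa : σ a = a * b * a⁻¹) (hσb : σ b = a⁻¹) :
    σ (σ (σ (σ a))) = ⁅a, b⁆ * a * ⁅a, b⁆⁻¹ := by
  have hΘ := map_commutatorElement_eq_self hσa hσb
  have ha := map_map_left_eq_commutatorElement_mul_inv hσa hσb
  calc
    σ (σ (σ (σ a))) = σ (σ (⁅a, b⁆ * a⁻¹)) := by rw [ha]
    _ = ⁅a, b⁆ * (σ (σ a))⁻¹ := by simp only [map_mul, map_inv, hΘ]
    _ = ⁅a, b⁆ * a * ⁅a, b⁆⁻¹ := by rw [ha, mul_inv_rev, inv_inv, mul_assoc]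

theorem map_four_right_eq_conj (hσa : σ a = a * b * a⁻¹) (hσb : σ b = a⁻¹) :
    σ (σ (σ (σ b))) = ⁅a, b⁆ * b * ⁅a, b⁆⁻¹ := by
  have hΘ := map_commutatorElement_eq_self hσa hσb
  have hb := map_map_right_eq_inv_mul_commutatorElement_inv hσa hσb
  calc
    σ (σ (σ (σ b))) = σ (σ (b⁻¹ * ⁅a, b⁆⁻¹)) := by rw [hb]
    _ = (σ (σ b))⁻¹ * ⁅a, b⁆⁻¹ := by simp only [map_mul, map_inv, hΘ]
    _ = ⁅a, b⁆ * b * ⁅a, b⁆⁻¹ := by rw [hb, mul_inv_rev, inv_inv, inv_inv]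

theorem map_four_eq_conj_of_mem_closure (hσa : σ a = a * b * a⁻¹) (hσb : σ b = a⁻¹)
    {x : G} (hx : x ∈ Subgroup.closure {a, b}) :
    σ (σ (σ (σ x))) = ⁅a, b⁆ * x * ⁅a, b⁆⁻¹ := by
  have agree_on_generators :
      Set.EqOn ((σ.comp σ).comp (σ.comp σ)) (MulAut.conj ⁅a, b⁆).toMonoidHom {a, b} := by
    rintro _ (rfl | rfl)
    · exact map_four_left_eq_conj hσa hσb
    · exact map_four_right_eq_conj hσa hσb
  exact MonoidHom.eqOn_closure agree_on_generators hx

theorem fourth_power_is_inner_general (hσa : σ a = a * b * a⁻¹) (hσb : σ b = a⁻¹) :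
    σ ⁅a, b⁆ = ⁅a, b⁆ ∧
      ∀ x ∈ Subgroup.closure {a, b}, σ (σ (σ (σ x))) = ⁅a, b⁆ * x * ⁅a, b⁆⁻¹ :=
  ⟨map_commutatorElement_eq_self hσa hσb, fun _ => map_four_eq_conj_of_mem_closure hσa hσb⟩

end

theorem closure_fα_fβ : Subgroup.closure {fα, fβ} = ⊤ := by
  have range_of : Set.range (FreeGroup.of : Fin 2 → F2) = {fα, fβ} := by
    ext x
    simp [fα, fβ, Fin.exists_fin_two, eq_comm]
  rw [← range_of, FreeGroup.closure_range_of]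

theorem fourth_power_is_inner
    (σ : F2 →* F2)
    (hσα : σ fα = fα * fβ * fα⁻¹) (hσβ : σ fβ = fα⁻¹) :
    σ (fα * fβ * fα⁻¹ * fβ⁻¹) = fα * fβ * fα⁻¹ * fβ⁻¹ ∧
    ∀ x : F2, σ (σ (σ (σ x)))
      = (fα * fβ * fα⁻¹ * fβ⁻¹) * x * (fα * fβ * fα⁻¹ * fβ⁻¹)⁻¹ :=
  (fourth_power_is_inner_general hσα hσβ).imp_right fun h x =>
    h x (closure_fα_fβ ▸ Subgroup.mem_top x)
end

section
/- For every integer n ≥ 0, any Lie derivation D of L of type ε^∨_{2n+2} annihilates the bracket of the generators: D(⁅𝖺, 𝖻⁆) = 0. -/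
open scoped BigOperators

noncomputable section

/-- The free Lie algebra over ℚ on two generators. -/
abbrev L2 : Type := FreeLieAlgebra ℚ (Fin 2)

/-- The first generator 𝖺 of the free Lie algebra. -/
def ga : L2 := FreeLieAlgebra.of ℚ 0

/-- The second generator 𝖻 of the free Lie algebra. -/
def gb : L2 := FreeLieAlgebra.of ℚ 1

/-- The adjoint action `ad x : y ↦ ⁅x, y⁆` on the free Lie algebra. -/
def adL (x : L2) : Module.End ℚ L2 := LieAlgebra.ad ℚ L2 x

/-- A Lie derivation `D` of `L2` is of type `ε^∨_{2n+2}` if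
`D 𝖺 = ad(𝖺)^{2n+2} 𝖻` and
`D 𝖻 = (1/2) ∑_{i+j=2n+1} (-1)^i ⁅ad(𝖺)^i 𝖻, ad(𝖺)^j 𝖻⁆`. -/
def IsEpsDual (n : ℕ) (D : LieDerivation ℚ L2 L2) : Prop :=
  D ga = (adL ga ^ (2 * n + 2)) gb ∧
  D gb = (1 / 2 : ℚ) • ∑ i ∈ Finset.range (2 * n + 2),
    ((-1 : ℚ)) ^ i • ⁅(adL ga ^ i) gb, (adL ga ^ (2 * n + 1 - i)) gb⁆

/-- A Lie derivation `D` of `L2` is of type `ε_{2n+2}` (the conjugate of `ε^∨_{2n+2}` by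
the automorphism `𝖺 ↦ 𝖻, 𝖻 ↦ -𝖺`). -/
def IsEps (n : ℕ) (D : LieDerivation ℚ L2 L2) : Prop :=
  D ga = -((1 / 2 : ℚ) • ∑ i ∈ Finset.range (2 * n + 2),
    ((-1 : ℚ)) ^ i • ⁅(adL gb ^ i) ga, (adL gb ^ (2 * n + 1 - i)) ga⁆) ∧
  D gb = -((adL gb ^ (2 * n + 2)) ga)

/-- A Lie derivation is of type `ε₀^∨` if it sends `𝖺 ↦ 𝖻` and `𝖻 ↦ 0`. -/
def IsEpsZeroDual (D : LieDerivation ℚ L2 L2) : Prop :=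
  D ga = gb ∧ D gb = 0

/-- A Lie derivation is of type `ε₀` if it sends `𝖺 ↦ 0` and `𝖻 ↦ -𝖺`. -/
def IsEpsZero (D : LieDerivation ℚ L2 L2) : Prop :=
  D ga = 0 ∧ D gb = -ga

/-!
Since `ad a` is a derivation, it sends the alternating sum of the brackets
`⁅ad(a)^i b, ad(a)^j b⁆` with `i + j = m - 1` to a telescoping sum, leaving only
`⁅b, ad(a)^m b⁆` and `-(-1)^m ⁅ad(a)^m b, b⁆`. For even `m` these two agree by antisymmetry, so
the factor `1/2` in `D b` gives `⁅a, D b⁆ = ⁅b, ad(a)^m b⁆`, which cancels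
`⁅D a, b⁆ = ⁅ad(a)^m b, b⁆` in `D ⁅a, b⁆`.
-/

section AlternatingSum

open LieAlgebra LieModule

variable {R L M : Type*} [CommRing R] [LieRing L] [LieAlgebra R L]
  [AddCommGroup M] [Module R M] [LieRingModule L M] [LieModule R L M]

theorem lie_lie_ad_pow_toEnd_pow (x y : L) (z : M) (i j : ℕ) :
    ⁅x, ⁅(ad R L x ^ i) y, (toEnd R L M x ^ j) z⁆⁆ =
      ⁅(ad R L x ^ (i + 1)) y, (toEnd R L M x ^ j) z⁆ +
        ⁅(ad R L x ^ i) y, (toEnd R L M x ^ (j + 1)) z⁆ := by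
  rw [leibniz_lie]
  simp only [pow_succ', Module.End.mul_apply, ad_apply, toEnd_apply_apply]

theorem lie_sum_neg_one_pow_smul_lie (x y : L) (z : M) (m : ℕ) :
    ⁅x, ∑ i ∈ Finset.range m,
        (-1 : R) ^ i • ⁅(ad R L x ^ i) y, (toEnd R L M x ^ (m - 1 - i)) z⁆⁆ =
      ⁅y, (toEnd R L M x ^ m) z⁆ - (-1 : R) ^ m • ⁅(ad R L x ^ m) y, z⁆ := by
  let f (i : ℕ) : M := (-1 : R) ^ i • ⁅(ad R L x ^ i) y, (toEnd R L M x ^ (m - i)) z⁆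
  have lie_term_eq_sub (i : ℕ) (hi : i ∈ Finset.range m) :
      ⁅x, (-1 : R) ^ i • ⁅(ad R L x ^ i) y, (toEnd R L M x ^ (m - 1 - i)) z⁆⁆ =
        f i - f (i + 1) := by
    have hlt : i < m := Finset.mem_range.mp hi
    have hsub : m - i = m - 1 - i + 1 := by lia
    have hsub_succ : m - (i + 1) = m - 1 - i := by lia
    simp only [f, lie_smul, lie_lie_ad_pow_toEnd_pow, hsub, hsub_succ, pow_succ (-1 : R)]
    module
  rw [lie_sum, Finset.sum_congr rfl lie_term_eq_sub, Finset.sum_range_sub']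
  simp [f]

theorem lie_sum_neg_one_pow_smul_lie_self_of_even (x y : L) {m : ℕ} (hm : Even m) :
    ⁅x, ∑ i ∈ Finset.range m,
        (-1 : R) ^ i • ⁅(ad R L x ^ i) y, (ad R L x ^ (m - 1 - i)) y⁆⁆ =
      (2 : R) • ⁅y, (ad R L x ^ m) y⁆ := by
  calc
    _ = ⁅y, (ad R L x ^ m) y⁆ - (-1 : R) ^ m • ⁅(ad R L x ^ m) y, y⁆ :=
      lie_sum_neg_one_pow_smul_lie x y y m
    _ = (2 : R) • ⁅y, (ad R L x ^ m) y⁆ := by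
      rw [hm.neg_one_pow, one_smul, ← lie_skew _ y, sub_neg_eq_add, two_smul]

/-- The case `m = 0`, where the sum is empty, is `ε₀^∨`. -/
theorem epsDual_annihilates_theta_general [Invertible (2 : R)] (D : LieDerivation R L L) (a b : L)
    {m : ℕ} (hm : Even m) (ha : D a = (ad R L a ^ m) b)
    (hb : D b = ⅟(2 : R) • ∑ i ∈ Finset.range m,
      (-1 : R) ^ i • ⁅(ad R L a ^ i) b, (ad R L a ^ (m - 1 - i)) b⁆) :
    D ⁅a, b⁆ = 0 := by
  have lie_apply_eq : ⁅a, D b⁆ = ⁅b, (ad R L a ^ m) b⁆ := by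
    rw [hb, lie_smul, lie_sum_neg_one_pow_smul_lie_self_of_even a b hm, invOf_smul_smul]
  rw [D.apply_lie_eq_add, lie_apply_eq, ha, ← lie_skew b, neg_add_cancel]

end AlternatingSum

theorem epsDual_annihilates_theta (n : ℕ) (D : LieDerivation ℚ L2 L2)
    (hD : IsEpsDual n D) :
    D ⁅ga, gb⁆ = 0 := by
  obtain ⟨hga, hgb⟩ := hD
  have even_exponent : Even (2 * n + 2) := ⟨n + 1, by ring⟩
  rw [one_div, ← invOf_eq_inv] at hgb
  exact epsDual_annihilates_theta_general D ga gb even_exponent hga hgb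
end
end

section
/- Let n ≥ 1, let D be a Lie derivation of L of type ε^∨_{2n+2}, and let D₀^∨ be a Lie derivation of type ε₀^∨. Then the (2n+1)-fold iterated bracket vanishes: ⁅D₀^∨, ⁅D₀^∨, …, ⁅D₀^∨, D⁆…⁆⁆ = 0 (i.e., (ad D₀^∨)^{2n+1}(D) = 0 in the Lie algebra of Lie derivations of L). -/
open scoped BigOperators

noncomputable section

/-!
The derivations `e : 𝖺 ↦ 0, 𝖻 ↦ 𝖺` and `h : 𝖺 ↦ 𝖺, 𝖻 ↦ -𝖻` complete `f = ε₀^∨` to an `sl₂`-triple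
acting on `L2`. The derivation `D = ε^∨_{2n+2}` commutes with `e` and has `h`-weight `2n`, so
`V = (ad f)^{2n+1} D` again commutes with `e` and has weight `-2n-2`. Then `V 𝖺`, and after it
`V 𝖻`, is killed by `e` and has negative weight. As `f` acts locally nilpotently on `L2`, weights
of highest weight vectors are natural numbers, so both values vanish.
-/

section FreeLieAlgebra

open FreeLieAlgebra LieAlgebra

variable {R X : Type*} [CommRing R]

theorem freeLieAlgebra_of_ne_zero [Nontrivial R] (x : X) : of R x ≠ 0 := by
  let := LieRing.ofAssociativeRing (A := R)
  intro hx
  have h_one : lift R (fun _ : X => (1 : R)) (of R x) = 1 := lift_of_apply _ x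
  exact one_ne_zero (h_one.symm.trans (by rw [hx, map_zero]))

theorem freeLieAlgebra_lieSpan_range_of :
    LieSubalgebra.lieSpan R (FreeLieAlgebra R X) (Set.range (of R)) = ⊤ := by
  set S := LieSubalgebra.lieSpan R (FreeLieAlgebra R X) (Set.range (of R))
  let toSpan : FreeLieAlgebra R X →ₗ⁅R⁆ S :=
    lift R fun x => ⟨of R x, LieSubalgebra.subset_lieSpan ⟨x, rfl⟩⟩
  have incl_comp_toSpan : S.incl.comp toSpan = LieHom.id := by
    ext x
    simp [toSpan]
  refine eq_top_iff.mpr fun y _ => ?_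
  rw [← LieHom.id_apply (R := R) y, ← incl_comp_toSpan]
  exact (toSpan y).2

variable {M : Type*} [AddCommGroup M] [Module R M] [LieRingModule (FreeLieAlgebra R X) M]
  [LieModule R (FreeLieAlgebra R X) M]

theorem lieDerivation_ext_freeLieAlgebra_of {D E : LieDerivation R (FreeLieAlgebra R X) M}
    (h : ∀ x, D (of R x) = E (of R x)) : D = E :=
  LieDerivation.ext_of_lieSpan_eq_top _ freeLieAlgebra_lieSpan_range_of (Set.forall_mem_range.mpr h)

variable (R X M) in
/-- The semidirect product of a free Lie algebra with a module `M` regarded as an abelian ideal,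
encoded as the extension attached to the zero 2-cocycle. -/
abbrev FreeLieSemidirect : Type _ :=
  ofTwoCocycle (0 : LieModule.Cohomology.twoCocycle R (FreeLieAlgebra R X) M)

/-- The Lie homomorphism sending each generator `x` to `(x, m x)`. It is the graph `y ↦ (y, D y)` of
the derivation `D` with `D x = m x` and serves to construct that derivation. -/
def derivationGraph (m : X → M) : FreeLieAlgebra R X →ₗ⁅R⁆ FreeLieSemidirect R X M :=
  lift R fun x => ofProd 0 (of R x, m x)

theorem derivationGraph_fst (m : X → M) (y : FreeLieAlgebra R X) :
    ((ofProd 0).symm (derivationGraph m y)).1 = y := by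
  let proj : FreeLieSemidirect R X M →ₗ⁅R⁆ FreeLieAlgebra R X :=
    { toFun z := ((ofProd 0).symm z).1
      map_add' _ _ := by rw [of_symm_add, Prod.fst_add]
      map_smul' _ _ := by rw [of_symm_smul, Prod.smul_fst, RingHom.id_apply]
      map_lie' := by simp [bracket_ofTwoCocycle] }
  have proj_comp_graph : proj.comp (derivationGraph m) = LieHom.id := by
    ext x
    simp [proj, derivationGraph]
  exact LieHom.congr_fun proj_comp_graph y

/-- The derivation of a free Lie algebra with prescribed values on the generators. -/
def liftDerivation (m : X → M) : LieDerivation R (FreeLieAlgebra R X) M where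
  toFun y := ((ofProd 0).symm (derivationGraph m y)).2
  map_add' y z := by simp
  map_smul' c y := by simp
  leibniz' y z := by simp [bracket_ofTwoCocycle, derivationGraph_fst]

theorem liftDerivation_of (m : X → M) (x : X) : liftDerivation m (of R x) = m x := by
  simp [liftDerivation, derivationGraph]

end FreeLieAlgebra

section LieDerivation

variable {R L : Type*} [CommRing R] [LieRing L] [LieAlgebra R L]

/-- The tautological action of the derivations of a Lie algebra. -/
instance : LieRingModule (LieDerivation R L L) L where
  bracket D x := D x
  add_lie _ _ _ := rfl
  lie_add D := map_add D
  leibniz_lie D E x := by simp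

instance : LieModule R (LieDerivation R L L) L where
  smul_lie _ _ _ := rfl
  lie_smul c D := map_smul D c

theorem lieDerivation_ad_pow_of_apply_eq_zero {D : LieDerivation R L L} {x : L} (hx : D x = 0)
    (k : ℕ) (y : L) :
    D ((LieAlgebra.ad R L x ^ k) y) = (LieAlgebra.ad R L x ^ k) (D y) := by
  induction k with
  | zero => simp
  | succ k ih => simp [pow_succ', D.apply_lie_eq_add, hx, ih]

theorem lieDerivation_ad_pow_of_apply_eq_smul {D : LieDerivation R L L} {x y : L} {c d : R}
    (hx : D x = c • x) (hy : D y = d • y) (k : ℕ) :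
    D ((LieAlgebra.ad R L x ^ k) y) = (k * c + d) • (LieAlgebra.ad R L x ^ k) y := by
  induction k with
  | zero => simp [hy]
  | succ k ih =>
    simp only [pow_succ', Module.End.mul_apply, LieAlgebra.ad_apply, D.apply_lie_eq_add, hx, ih,
      lie_smul, smul_lie, Nat.cast_succ]
    module

/-- The Lie subalgebra of elements killed by some power of a derivation, the analogue for
derivations of `LieSubalgebra.engel`. It reduces local nilpotence to a check on generators. -/
def engelOfDerivation (D : LieDerivation R L L) : LieSubalgebra R L where
  __ := (LieModule.toEnd R (LieDerivation R L L) L D).maxGenEigenspace 0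
  lie_mem' {x y} hx hy := by
    simp only [AddSubsemigroup.mem_carrier, AddSubmonoid.mem_toSubsemigroup,
      Submodule.mem_toAddSubmonoid, Module.End.mem_maxGenEigenspace, zero_smul, sub_zero]
      at hx hy ⊢
    obtain ⟨p, hp⟩ := hx
    obtain ⟨q, hq⟩ := hy
    refine ⟨p + q, ?_⟩
    rw [Module.End.pow_apply]
    refine (D.iterate_apply_lie (p + q) x y).trans (Finset.sum_eq_zero fun ij hij => ?_)
    have iterate_eq_pow (k : ℕ) (z : L) :
        D^[k] z = (LieModule.toEnd R (LieDerivation R L L) L D ^ k) z :=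
      (Module.End.pow_apply _ k z).symm
    have h_le : p ≤ ij.1 ∨ q ≤ ij.2 := by
      rw [Finset.HasAntidiagonal.mem_antidiagonal] at hij
      lia
    rcases h_le with h | h <;> simp [iterate_eq_pow, Module.End.pow_map_zero_of_le h, hp, hq]

theorem mem_engelOfDerivation {D : LieDerivation R L L} {x : L} :
    x ∈ engelOfDerivation D ↔
      ∃ k, (LieModule.toEnd R (LieDerivation R L L) L D ^ k) x = 0 := by
  rw [engelOfDerivation, ← LieSubalgebra.mem_toSubmodule, Module.End.mem_maxGenEigenspace]
  simp only [zero_smul, sub_zero]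

end LieDerivation

section Sl2

variable {R L M : Type*} [CommRing R] [IsDomain R] [CharZero R] [LieRing L] [LieAlgebra R L]
  [AddCommGroup M] [Module R M] [LieRingModule L M] [LieModule R L M]
  [Module.IsTorsionFree R M]

theorem exists_nat_eq_of_pow_toEnd_f_eq_zero {h e f : L} {t : IsSl2Triple h e f} {m : M} {μ : R}
    (P : t.HasPrimitiveVectorWith m μ) (hf : ∃ k, (LieModule.toEnd R L M f ^ k) m = 0) :
    ∃ n : ℕ, μ = n := by
  obtain ⟨n, hn, hn_succ⟩ := Nat.exists_not_and_succ_of_not_zero_of_exists P.ne_zero hf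
  have h_smul : ((n + 1) * (μ - n)) • (LieModule.toEnd R L M f ^ n) m = 0 := by
    rw [← P.lie_e_pow_succ_toEnd_f, hn_succ, lie_zero]
  have h_coeff := (smul_eq_zero_iff_left hn).mp h_smul
  exact ⟨n, sub_eq_zero.mp ((mul_eq_zero.mp h_coeff).resolve_left n.cast_add_one_ne_zero)⟩

end Sl2

section EpsDual

variable {n : ℕ} {D D0 : LieDerivation ℚ L2 L2}

/-- The derivation `𝖺 ↦ 0`, `𝖻 ↦ 𝖺`, that is `-ε₀`: the raising operator of the `sl₂`-triple. -/
def raisingDerivation : LieDerivation ℚ L2 L2 := liftDerivation ![0, ga]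

/-- The derivation `𝖺 ↦ 𝖺`, `𝖻 ↦ -𝖻`, whose eigenvalue on a bihomogeneous element is the degree in
`𝖺` minus the degree in `𝖻`: the Cartan element of the `sl₂`-triple. -/
def weightDerivation : LieDerivation ℚ L2 L2 := liftDerivation ![ga, -gb]

@[simp]
theorem raisingDerivation_ga : raisingDerivation ga = 0 := liftDerivation_of _ 0

@[simp]
theorem raisingDerivation_gb : raisingDerivation gb = ga := liftDerivation_of _ 1

@[simp]
theorem weightDerivation_ga : weightDerivation ga = ga := liftDerivation_of _ 0

@[simp]
theorem weightDerivation_gb : weightDerivation gb = -gb := liftDerivation_of _ 1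

theorem lieDerivation_ext_ga_gb {E F : LieDerivation ℚ L2 L2} (ha : E ga = F ga)
    (hb : E gb = F gb) : E = F :=
  lieDerivation_ext_freeLieAlgebra_of (Fin.forall_fin_two.mpr ⟨ha, hb⟩)

theorem isSl2Triple_weight_raising (hD0 : IsEpsZeroDual D0) :
    IsSl2Triple weightDerivation raisingDerivation D0 where
  h_ne_zero h0 := freeLieAlgebra_of_ne_zero (R := ℚ) (0 : Fin 2) <|
    weightDerivation_ga.symm.trans (LieDerivation.congr_fun h0 ga)
  lie_e_f := lieDerivation_ext_ga_gb (by simp [hD0.1]) (by simp [hD0.1, hD0.2])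
  lie_h_e_nsmul := lieDerivation_ext_ga_gb (by simp) (by simp [two_smul])
  lie_h_f_nsmul := lieDerivation_ext_ga_gb (by simp [hD0.1, two_smul, sub_eq_add_neg])
    (by simp [hD0.2])

theorem engelOfDerivation_eq_top (hD0 : IsEpsZeroDual D0) : engelOfDerivation D0 = ⊤ := by
  rw [eq_top_iff, ← freeLieAlgebra_lieSpan_range_of, LieSubalgebra.lieSpan_le, Set.range_subset_iff,
    Fin.forall_fin_two]
  have hb : D0 gb = 0 := hD0.2
  have ha : D0 (D0 ga) = 0 := by rw [hD0.1, hb]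
  exact ⟨mem_engelOfDerivation.mpr ⟨2, ha⟩, mem_engelOfDerivation.mpr ⟨1, hb⟩⟩

theorem raisingDerivation_ad_pow (k : ℕ) :
    raisingDerivation ((adL ga ^ k) gb) = if k = 0 then ga else 0 := by
  rw [adL, lieDerivation_ad_pow_of_apply_eq_zero raisingDerivation_ga, raisingDerivation_gb]
  cases k <;> simp [pow_succ]

theorem weightDerivation_ad_pow (k : ℕ) :
    weightDerivation ((adL ga ^ k) gb) = (k - 1 : ℚ) • (adL ga ^ k) gb := by
  rw [adL, lieDerivation_ad_pow_of_apply_eq_smul (c := 1) (d := -1) (by simp) (by simp),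
    mul_one, ← sub_eq_add_neg]

theorem raisingDerivation_apply_gb (hD : IsEpsDual n D) : raisingDerivation (D gb) = D ga := by
  have left_terms : ∑ i ∈ Finset.range (2 * n + 2), (-1 : ℚ) ^ i •
      ⁅raisingDerivation ((adL ga ^ i) gb), (adL ga ^ (2 * n + 1 - i)) gb⁆ = D ga := by
    rw [Finset.sum_range_succ', Finset.sum_eq_zero (by simp [raisingDerivation_ad_pow]), hD.1,
      pow_succ']
    simp [adL]
  have right_terms : ∑ i ∈ Finset.range (2 * n + 2), (-1 : ℚ) ^ i •
      ⁅(adL ga ^ i) gb, raisingDerivation ((adL ga ^ (2 * n + 1 - i)) gb)⁆ = D ga := by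
    have inner_terms : ∀ i ∈ Finset.range (2 * n + 1), (-1 : ℚ) ^ i •
        ⁅(adL ga ^ i) gb, raisingDerivation ((adL ga ^ (2 * n + 1 - i)) gb)⁆ = 0 := by
      intro i hi
      rw [raisingDerivation_ad_pow, if_neg (Nat.sub_ne_zero_of_lt (Finset.mem_range.mp hi)),
        lie_zero, smul_zero]
    rw [Finset.sum_range_succ, Finset.sum_eq_zero inner_terms, hD.1, pow_succ' _ (2 * n + 1)]
    simp [adL, (odd_two_mul_add_one n).neg_one_pow]
  rw [hD.2]
  simp only [map_smul, map_sum, LieDerivation.apply_lie_eq_add, smul_add, Finset.sum_add_distrib,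
    left_terms, right_terms]
  module

theorem weightDerivation_apply_gb (hD : IsEpsDual n D) :
    weightDerivation (D gb) = (2 * n - 1 : ℚ) • D gb := by
  rw [hD.2, map_smul, map_sum, smul_comm, Finset.smul_sum (r := (2 * n - 1 : ℚ))]
  refine congrArg _ (Finset.sum_congr rfl fun i hi => ?_)
  have hi_le : i ≤ 2 * n + 1 := Finset.mem_range_succ_iff.mp hi
  rw [map_smul, LieDerivation.apply_lie_eq_add, weightDerivation_ad_pow, weightDerivation_ad_pow,
    lie_smul, smul_lie, Nat.cast_sub hi_le]
  push_cast
  module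

theorem lie_raisingDerivation (hD : IsEpsDual n D) : ⁅raisingDerivation, D⁆ = 0 := by
  apply lieDerivation_ext_ga_gb
  · simp [hD.1, raisingDerivation_ad_pow]
  · simp [raisingDerivation_apply_gb hD]

theorem lie_weightDerivation (hD : IsEpsDual n D) : ⁅weightDerivation, D⁆ = (2 * n : ℚ) • D := by
  apply lieDerivation_ext_ga_gb
  · simp only [LieDerivation.lie_apply, LieDerivation.smul_apply, weightDerivation_ga, hD.1,
      weightDerivation_ad_pow]
    push_cast
    module
  · simp only [LieDerivation.lie_apply, LieDerivation.smul_apply, weightDerivation_gb, map_neg,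
      weightDerivation_apply_gb hD]
    module

theorem eq_zero_of_raising_eq_zero_of_neg_weight (hD0 : IsEpsZeroDual D0) {x : L2} {μ : ℚ}
    (he : raisingDerivation x = 0) (hh : weightDerivation x = μ • x) (hμ : μ < 0) : x = 0 := by
  by_contra hx
  have P : (isSl2Triple_weight_raising hD0).HasPrimitiveVectorWith x μ := ⟨hx, hh, he⟩
  have hf : x ∈ engelOfDerivation D0 := engelOfDerivation_eq_top hD0 ▸ LieSubalgebra.mem_top x
  obtain ⟨k, rfl⟩ := exists_nat_eq_of_pow_toEnd_f_eq_zero P (mem_engelOfDerivation.mp hf)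
  exact hμ.not_ge k.cast_nonneg

theorem lieDerivation_eq_zero_of_lie_raising_eq_zero (hD0 : IsEpsZeroDual D0)
    {V : LieDerivation ℚ L2 L2} {μ : ℚ} (he : ⁅raisingDerivation, V⁆ = 0)
    (hh : ⁅weightDerivation, V⁆ = μ • V) (hμ : μ < -1) : V = 0 := by
  have raising_apply (x : L2) : raisingDerivation (V x) = V (raisingDerivation x) :=
    sub_eq_zero.mp (LieDerivation.congr_fun he x)
  have weight_apply (x : L2) : weightDerivation (V x) = μ • V x + V (weightDerivation x) :=
    sub_eq_iff_eq_add.mp (LieDerivation.congr_fun hh x)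
  have hVa : V ga = 0 :=
    eq_zero_of_raising_eq_zero_of_neg_weight hD0 (μ := μ + 1) (by simp [raising_apply])
      (by simp [weight_apply, add_smul]) (by linarith)
  have hVb : V gb = 0 :=
    eq_zero_of_raising_eq_zero_of_neg_weight hD0 (μ := μ - 1) (by simp [raising_apply, hVa])
      (by simp [weight_apply, sub_smul, ← sub_eq_add_neg]) (by linarith)
  exact lieDerivation_ext_ga_gb hVa hVb

end EpsDual

theorem epsDual_nilpotency (n : ℕ) (hn : 1 ≤ n)
    (D D0 : LieDerivation ℚ L2 L2)
    (hD : IsEpsDual n D) (hD0 : IsEpsZeroDual D0) :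
    (LieAlgebra.ad ℚ (LieDerivation ℚ L2 L2) D0 ^ (2 * n + 1)) D = 0 := by
  rcases eq_or_ne D 0 with rfl | hD_ne
  · exact map_zero _
  have P : (isSl2Triple_weight_raising hD0).HasPrimitiveVectorWith D (2 * n : ℚ) :=
    ⟨hD_ne, lie_weightDerivation hD, lie_raisingDerivation hD⟩
  have he : ⁅raisingDerivation, (LieAlgebra.ad ℚ _ D0 ^ (2 * n + 1)) D⁆ = 0 :=
    (P.lie_e_pow_succ_toEnd_f (2 * n)).trans (by simp)
  have hh := P.lie_h_pow_toEnd_f (2 * n + 1)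
  refine lieDerivation_eq_zero_of_lie_raising_eq_zero hD0 he hh ?_
  push_cast
  linarith [n.cast_nonneg (α := ℚ)]
end
end

section
/- Let n ≥ 1, let D be a Lie derivation of L of type ε^∨_{2n+2}, and let D₀ be a Lie derivation of type ε₀. Then D is a highest-weight vector for the lowering operator: ⁅D₀, D⁆ = 0 in the Lie algebra of Lie derivations of L. -/
open scoped BigOperators

noncomputable section

/-!
A derivation is determined by its values on generators, so `⁅D₀, D⁆` need only be evaluated at
`𝖺` and `𝖻`. Since `D₀ 𝖺 = 0`, the lowering operator `D₀` commutes with `ad 𝖺`; as `D₀ 𝖻 = -𝖺`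
commutes with `𝖺`, it kills `x i = (ad 𝖺)^i 𝖻` for every `i ≠ 0`. Hence `D₀ (D 𝖺) = 0`, and in the
alternating sum `∑ (-1)^i ⁅x i, x (m - i)⁆` with `m = 2n + 1` only the two end terms survive. They
agree because `m` is odd, and half their sum is `-⁅𝖺, x m⁆ = -D 𝖺 = D (D₀ 𝖻)`.
-/

section Generators

open LieSubalgebra

theorem lieSpan_range_freeLieAlgebra_of (R : Type*) [CommRing R] (X : Type*) :
    lieSpan R (FreeLieAlgebra R X) (Set.range (FreeLieAlgebra.of R)) = ⊤ := by
  set S := lieSpan R (FreeLieAlgebra R X) (Set.range (FreeLieAlgebra.of R))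
  let f : FreeLieAlgebra R X →ₗ⁅R⁆ S :=
    FreeLieAlgebra.lift R fun x => ⟨FreeLieAlgebra.of R x, subset_lieSpan (Set.mem_range_self x)⟩
  have incl_comp_f : S.incl.comp f = LieHom.id := by
    ext x
    simp [f]
  rw [eq_top_iff]
  intro y _
  have f_apply : (f y : FreeLieAlgebra R X) = y := LieHom.congr_fun incl_comp_f y
  exact f_apply ▸ (f y).property

theorem lieSpan_ga_gb : lieSpan ℚ L2 {ga, gb} = ⊤ := by
  rw [← lieSpan_range_freeLieAlgebra_of ℚ (Fin 2)]
  congr 1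
  ext x
  simp [ga, gb, Fin.exists_fin_two, eq_comm]

end Generators

section LieDerivation

open LieAlgebra

variable {R L : Type*} [CommRing R] [LieRing L] [LieAlgebra R L]
  {D D₀ : LieDerivation R L L} {a b : L}

theorem lieDerivation_apply_ad_pow (ha : D a = 0) (k : ℕ) (y : L) :
    D ((ad R L a ^ k) y) = (ad R L a ^ k) (D y) := by
  have comm_ad : Commute (D : L →ₗ[R] L) (ad R L a) := by
    ext z
    simp [ha]
  exact LinearMap.congr_fun (comm_ad.pow_right k) y

theorem lieDerivation_apply_ad_pow_eq_zero (ha : D a = 0) (hb : ⁅a, D b⁆ = 0) {k : ℕ}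
    (hk : k ≠ 0) : D ((ad R L a ^ k) b) = 0 := by
  rw [lieDerivation_apply_ad_pow ha]
  exact Module.End.pow_map_zero_of_le (Nat.one_le_iff_ne_zero.mpr hk) (by rwa [pow_one, ad_apply])

theorem lieDerivation_apply_sum_smul_lie {x : ℕ → L} (hx : ∀ i ≠ 0, D (x i) = 0)
    (c : ℕ → R) (m : ℕ) :
    D (∑ i ∈ Finset.range (m + 1), c i • ⁅x i, x (m - i)⁆) =
      c 0 • ⁅D (x 0), x m⁆ + c m • ⁅x m, D (x 0)⁆ := by
  have left_sum : ∑ i ∈ Finset.range (m + 1), c i • ⁅D (x i), x (m - i)⁆ =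
      c 0 • ⁅D (x 0), x m⁆ :=
    Finset.sum_eq_single_of_mem 0 (by simp) fun i _ hi => by simp [hx i hi]
  have right_sum : ∑ i ∈ Finset.range (m + 1), c i • ⁅x i, D (x (m - i))⁆ =
      c m • ⁅x m, D (x 0)⁆ := by
    rw [Finset.sum_range_succ, Finset.sum_eq_zero, zero_add, Nat.sub_self]
    intro i hi
    rw [hx _ (Nat.sub_ne_zero_of_lt (Finset.mem_range.mp hi)), lie_zero, smul_zero]
  simp only [map_sum, map_smul, LieDerivation.apply_lie_eq_add, smul_add,
    Finset.sum_add_distrib, left_sum, right_sum]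
  exact add_comm _ _

theorem lieDerivation_apply_sum_neg_one_pow_smul_lie {x : ℕ → L} (hx : ∀ i ≠ 0, D (x i) = 0)
    {m : ℕ} (hm : Odd m) :
    D (∑ i ∈ Finset.range (m + 1), (-1 : R) ^ i • ⁅x i, x (m - i)⁆) =
      (2 : R) • ⁅D (x 0), x m⁆ := by
  rw [lieDerivation_apply_sum_smul_lie hx, pow_zero, hm.neg_one_pow, neg_one_smul, lie_skew,
    one_smul, two_smul]

theorem epsDual_highest_weight_general [Invertible (2 : R)]
    (span_eq_top : LieSubalgebra.lieSpan R L {a, b} = ⊤) (n : ℕ)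
    (hDa : D a = (ad R L a ^ (2 * n + 2)) b)
    (hDb : D b = (⅟2 : R) • ∑ i ∈ Finset.range (2 * n + 2),
      (-1 : R) ^ i • ⁅(ad R L a ^ i) b, (ad R L a ^ (2 * n + 1 - i)) b⁆)
    (hD₀a : D₀ a = 0) (hD₀b : D₀ b = -a) :
    ⁅D₀, D⁆ = 0 := by
  have D₀_ad_pow : ∀ i ≠ 0, D₀ ((ad R L a ^ i) b) = 0 := fun _ =>
    lieDerivation_apply_ad_pow_eq_zero hD₀a (by rw [hD₀b, lie_neg, lie_self, neg_zero])
  have D₀_D_a : D₀ (D a) = 0 := by rw [hDa, D₀_ad_pow _ (by omega)]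
  have D₀_D_b : D₀ (D b) = -D a := by
    rw [hDb, map_smul, lieDerivation_apply_sum_neg_one_pow_smul_lie D₀_ad_pow
      (odd_two_mul_add_one n), invOf_smul_smul, pow_zero, Module.End.one_apply, hD₀b, neg_lie,
      hDa, pow_succ' _ (2 * n + 1), Module.End.mul_apply, ad_apply]
  apply LieDerivation.ext_of_lieSpan_eq_top _ span_eq_top
  rintro x (rfl | rfl)
  · simp [D₀_D_a, hD₀a]
  · simp [D₀_D_b, hD₀b]

end LieDerivation

theorem epsDual_highest_weight (n : ℕ) (hn : 1 ≤ n)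
    (D D0 : LieDerivation ℚ L2 L2)
    (hD : IsEpsDual n D) (hD0 : IsEpsZero D0) :
    ⁅D0, D⁆ = 0 :=
  epsDual_highest_weight_general lieSpan_ga_gb n hD.1
    (by rw [invOf_eq_inv, ← one_div]; exact hD.2) hD0.1 hD0.2
end
end
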